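/- arXiv:2010.03748 — 3 statements merged into one kernel-verified Lean document; each statement's English description precedes it below -/
import Mathlib

section
/- Let G be a finite simple connected graph of order n, size m, maximum degree Δ, with p pendent vertices and minimum non-pendent vertex degree δ₁. Then AG(G) ≥ p(δ₁+1)/(2√δ₁) + (√(2(m−p)(Δ+δ₁)√(Δδ₁)) / (Δ(Δ+δ₁+2√(Δδ₁))))·√(F(G) + 2mΔ² − p(3Δ²+1)), with equality if and only if G is isomorphic to the star K_{1,n−1}, or G is regular, or G is (Δ,1)-semiregular. -/
open SimpleGraph

/-- The degree of a vertex, as a natural number (classical, to avoid decidability assumptions). -/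
noncomputable def ndeg {V : Type*} [Fintype V] (G : SimpleGraph V) (v : V) : ℕ :=
  letI := Classical.decRel G.Adj
  G.degree v

/-- The degree of a vertex, as a real number. -/
noncomputable def deg {V : Type*} [Fintype V] (G : SimpleGraph V) (v : V) : ℝ :=
  (ndeg G v : ℝ)

/-- For a symmetric function `f`, `edgeSum G f = Σ_{uv ∈ E(G)} f (d_u) (d_v)`:
each unordered edge is counted twice in the double sum, hence the factor `1/2`. -/
noncomputable def edgeSum {V : Type*} [Fintype V] (G : SimpleGraph V) (f : ℝ → ℝ → ℝ) : ℝ :=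
  letI := Classical.decRel G.Adj
  (1 / 2) * ∑ u : V, ∑ w : V, if G.Adj u w then f (deg G u) (deg G w) else 0

/-- The arithmetic-geometric index `AG(G) = Σ_{uv ∈ E(G)} (1/2)(√(d_u/d_v) + √(d_v/d_u))`. -/
noncomputable def AG {V : Type*} [Fintype V] (G : SimpleGraph V) : ℝ :=
  edgeSum G (fun x y => (Real.sqrt (x / y) + Real.sqrt (y / x)) / 2)

/-- The first geometric-arithmetic index `GA(G) = Σ_{uv ∈ E(G)} 2√(d_u d_v)/(d_u + d_v)`. -/
noncomputable def GA {V : Type*} [Fintype V] (G : SimpleGraph V) : ℝ :=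
  edgeSum G (fun x y => 2 * Real.sqrt (x * y) / (x + y))

/-- The forgotten index `F(G) = Σ_{uv ∈ E(G)} (d_u² + d_v²)`. -/
noncomputable def forgottenIndex {V : Type*} [Fintype V] (G : SimpleGraph V) : ℝ :=
  edgeSum G (fun x y => x ^ 2 + y ^ 2)

/-- The first Zagreb index `M₁(G) = Σ_{uv ∈ E(G)} (d_u + d_v)`. -/
noncomputable def M1 {V : Type*} [Fintype V] (G : SimpleGraph V) : ℝ :=
  edgeSum G (fun x y => x + y)

/-- The second Zagreb index `M₂(G) = Σ_{uv ∈ E(G)} d_u d_v`. -/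
noncomputable def M2 {V : Type*} [Fintype V] (G : SimpleGraph V) : ℝ :=
  edgeSum G (fun x y => x * y)

/-- The symmetric division deg index `SDD(G) = Σ_{uv ∈ E(G)} (d_u/d_v + d_v/d_u)`. -/
noncomputable def SDD {V : Type*} [Fintype V] (G : SimpleGraph V) : ℝ :=
  edgeSum G (fun x y => x / y + y / x)

/-- The atom-bond connectivity index `ABC(G) = Σ_{uv ∈ E(G)} √((d_u + d_v − 2)/(d_u d_v))`. -/
noncomputable def ABC {V : Type*} [Fintype V] (G : SimpleGraph V) : ℝ :=
  edgeSum G (fun x y => Real.sqrt ((x + y - 2) / (x * y)))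

/-- `G` is `(s,r)`-semiregular: its vertex set is the disjoint union of two nonempty sets,
all vertices of the first having degree `s` and all vertices of the second degree `r`. -/
def IsSemiregular {V : Type*} [Fintype V] (G : SimpleGraph V) (s r : ℕ) : Prop :=
  ∃ V₁ V₂ : Set V, V₁.Nonempty ∧ V₂.Nonempty ∧ Disjoint V₁ V₂ ∧ V₁ ∪ V₂ = Set.univ ∧
    (∀ v ∈ V₁, ndeg G v = s) ∧ (∀ v ∈ V₂, ndeg G v = r)

/-- The contribution `(√(x/y) + √(y/x)) / 2` of an edge with end degrees `x`, `y` to `AG`. -/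
noncomputable def agTerm (x y : ℝ) : ℝ := (Real.sqrt (x / y) + Real.sqrt (y / x)) / 2

/-- The indicator of being equal to `1`, used to single out pendent vertices. -/
noncomputable def pendentInd (x : ℝ) : ℝ := if x = 1 then 1 else 0

lemma pendentInd_one : pendentInd 1 = 1 := if_pos rfl

lemma pendentInd_of_ne {x : ℝ} (hx : x ≠ 1) : pendentInd x = 0 := if_neg hx

lemma agTerm_comm (x y : ℝ) : agTerm x y = agTerm y x := by
  simp only [agTerm, add_comm]

lemma one_le_agTerm {x y : ℝ} (hx : 0 < x) (hy : 0 < y) : 1 ≤ agTerm x y := by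
  have hs := Real.sqrt_pos.2 hx
  have ht := Real.sqrt_pos.2 hy
  rw [agTerm, Real.sqrt_div hx.le, Real.sqrt_div hy.le, le_div_iff₀ two_pos,
    div_add_div _ _ ht.ne' hs.ne', le_div_iff₀ (by positivity)]
  nlinarith [sq_nonneg (Real.sqrt x - Real.sqrt y)]

lemma agTerm_self {x : ℝ} (hx : 0 < x) : agTerm x x = 1 := by
  simp [agTerm, div_self hx.ne']

lemma agTerm_one_right {x : ℝ} (hx : 0 < x) : agTerm x 1 = (x + 1) / (2 * Real.sqrt x) := by
  have hs := Real.sqrt_pos.2 hx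
  rw [agTerm, div_one, Real.sqrt_div zero_le_one, Real.sqrt_one]
  field_simp
  rw [Real.sq_sqrt hx.le]

lemma agTerm_one_lt {x y : ℝ} (hx : 1 ≤ x) (hxy : x < y) : agTerm x 1 < agTerm y 1 := by
  have hs : 1 ≤ Real.sqrt x := Real.one_le_sqrt.2 hx
  have hst : Real.sqrt x < Real.sqrt y := Real.sqrt_lt_sqrt (by linarith) hxy
  simp only [agTerm, div_one, Real.sqrt_div zero_le_one, Real.sqrt_one]
  generalize Real.sqrt x = s at *
  generalize Real.sqrt y = t at *
  have hs0 : 0 < s := by linarith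
  have ht0 : 0 < t := by linarith
  have key : t + 1 / t - (s + 1 / s) = (t - s) * (s * t - 1) / (s * t) := by
    field_simp
    ring
  have : 0 < (t - s) * (s * t - 1) / (s * t) :=
    div_pos (mul_pos (by linarith) (by nlinarith)) (by positivity)
  linarith

lemma agTerm_one_le {x y : ℝ} (hx : 1 ≤ x) (hxy : x ≤ y) : agTerm x 1 ≤ agTerm y 1 := by
  rcases hxy.eq_or_lt with rfl | h
  · exact le_rfl
  · exact (agTerm_one_lt hx h).le

section BoundFactor

variable {D d k X : ℝ}

lemma sqrt_mul_sqrt_le (hd : 0 < d) (hdD : d ≤ D) (hk : 0 ≤ k) (hX : X ≤ 4 * D ^ 2 * k) :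
    Real.sqrt (2 * k * (D + d) * Real.sqrt (D * d)) * Real.sqrt X ≤
      k * D * Real.sqrt (8 * (D + d) * Real.sqrt (D * d)) := by
  have hD : 0 < D := hd.trans_le hdD
  calc _ ≤ Real.sqrt (2 * k * (D + d) * Real.sqrt (D * d)) * Real.sqrt (4 * D ^ 2 * k) := by gcongr
    _ = Real.sqrt ((k * D) ^ 2 * (8 * (D + d) * Real.sqrt (D * d))) := by
      rw [← Real.sqrt_mul (by positivity)]
      ring_nf
    _ = _ := by rw [Real.sqrt_mul (by positivity), Real.sqrt_sq (by positivity)]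

lemma sqrt_amgm_le (hd : 0 < d) (hD : 0 < D) :
    Real.sqrt (8 * (D + d) * Real.sqrt (D * d)) ≤ D + d + 2 * Real.sqrt (D * d) :=
  Real.sqrt_le_iff.2 ⟨by positivity, by nlinarith [sq_nonneg (D + d - 2 * Real.sqrt (D * d))]⟩

lemma eq_of_sqrt_amgm_ge (hd : 0 < d) (hD : 0 < D)
    (h : D + d + 2 * Real.sqrt (D * d) ≤ Real.sqrt (8 * (D + d) * Real.sqrt (D * d))) :
    D = d := by
  have h1 := Real.le_sqrt' (by positivity) |>.1 h
  have h2 : Real.sqrt (D * d) ^ 2 = D * d := Real.sq_sqrt (by positivity)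
  have h3 : D + d - 2 * Real.sqrt (D * d) = 0 :=
    pow_eq_zero_iff two_ne_zero |>.1 (le_antisymm (by nlinarith) (sq_nonneg _))
  have h4 : (D - d) ^ 2 = 0 := by
    have h5 : D + d = 2 * Real.sqrt (D * d) := by linarith
    have h6 : (D + d) ^ 2 = 4 * (D * d) := by rw [h5, mul_pow, h2]; norm_num
    linarith
  exact sub_eq_zero.1 (pow_eq_zero_iff two_ne_zero |>.1 h4)

lemma sqrt_div_mul_sqrt_le (hd : 0 < d) (hdD : d ≤ D) (hk : 0 ≤ k) (hX : X ≤ 4 * D ^ 2 * k) :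
    Real.sqrt (2 * k * (D + d) * Real.sqrt (D * d)) / (D * (D + d + 2 * Real.sqrt (D * d))) *
      Real.sqrt X ≤ k := by
  have hD : 0 < D := hd.trans_le hdD
  rw [div_mul_eq_mul_div, div_le_iff₀ (by positivity), ← mul_assoc]
  exact (sqrt_mul_sqrt_le hd hdD hk hX).trans (by gcongr; exact sqrt_amgm_le hd hD)

lemma eq_of_sqrt_div_mul_sqrt_eq (hd : 0 < d) (hdD : d ≤ D) (hk : 0 < k) (hX : X ≤ 4 * D ^ 2 * k)
    (h : Real.sqrt (2 * k * (D + d) * Real.sqrt (D * d)) /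
      (D * (D + d + 2 * Real.sqrt (D * d))) * Real.sqrt X = k) : D = d := by
  have hD : 0 < D := hd.trans_le hdD
  rw [div_mul_eq_mul_div, div_eq_iff (by positivity), ← mul_assoc] at h
  have h1 := sqrt_mul_sqrt_le hd hdD hk.le hX
  rw [h] at h1
  exact eq_of_sqrt_amgm_ge hd hD (le_of_mul_le_mul_left h1 (by positivity))

lemma sqrt_div_mul_sqrt_self (hD : 0 < D) (hk : 0 ≤ k) :
    Real.sqrt (2 * k * (D + D) * Real.sqrt (D * D)) / (D * (D + D + 2 * Real.sqrt (D * D))) *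
      Real.sqrt (4 * D ^ 2 * k) = k := by
  rw [Real.sqrt_mul_self hD.le, div_mul_eq_mul_div, div_eq_iff (by positivity),
    show 2 * k * (D + D) * D = 4 * D ^ 2 * k by ring, Real.mul_self_sqrt (by positivity)]
  ring

end BoundFactor

section EdgeSum

variable {V : Type*} [Fintype V] {G : SimpleGraph V}

lemma edgeSum_congr {f g : ℝ → ℝ → ℝ}
    (h : ∀ u w, G.Adj u w → f (deg G u) (deg G w) = g (deg G u) (deg G w)) :
    edgeSum G f = edgeSum G g := by
  classical
  unfold edgeSum
  congr 1
  refine Finset.sum_congr rfl fun u _ => Finset.sum_congr rfl fun w _ => ?_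
  split_ifs with hA
  · exact h u w hA
  · rfl

lemma edgeSum_mono {f g : ℝ → ℝ → ℝ}
    (h : ∀ u w, G.Adj u w → f (deg G u) (deg G w) ≤ g (deg G u) (deg G w)) :
    edgeSum G f ≤ edgeSum G g := by
  classical
  unfold edgeSum
  gcongr with u _ w _
  split_ifs with hA
  · exact h u w hA
  · exact le_rfl

lemma eq_of_edgeSum_eq {f g : ℝ → ℝ → ℝ}
    (h : ∀ u w, G.Adj u w → f (deg G u) (deg G w) ≤ g (deg G u) (deg G w))
    (he : edgeSum G f = edgeSum G g) {u w : V} (hA : G.Adj u w) :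
    f (deg G u) (deg G w) = g (deg G u) (deg G w) := by
  classical
  unfold edgeSum at he
  have hle : ∀ u w, (if G.Adj u w then f (deg G u) (deg G w) else 0) ≤
      if G.Adj u w then g (deg G u) (deg G w) else 0 := by
    intro u w
    split_ifs with hA
    · exact h u w hA
    · exact le_rfl
  have h1 := (Finset.sum_eq_sum_iff_of_le fun u _ => Finset.sum_le_sum fun w _ => hle u w).1
    (mul_left_cancel₀ (by norm_num) he) u (Finset.mem_univ u)
  have h2 := (Finset.sum_eq_sum_iff_of_le fun w _ => hle u w).1 h1 w (Finset.mem_univ w)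
  simpa [hA] using h2

lemma edgeSum_add (f g : ℝ → ℝ → ℝ) :
    edgeSum G (fun x y => f x y + g x y) = edgeSum G f + edgeSum G g := by
  classical
  simp only [edgeSum, ← mul_add, ← Finset.sum_add_distrib]
  refine congrArg _ (Finset.sum_congr rfl fun u _ => Finset.sum_congr rfl fun w _ => ?_)
  split_ifs <;> simp

lemma edgeSum_const_mul (c : ℝ) (f : ℝ → ℝ → ℝ) :
    edgeSum G (fun x y => c * f x y) = c * edgeSum G f := by
  classical
  simp only [edgeSum, Finset.mul_sum, mul_ite, mul_zero, mul_left_comm c]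

lemma sum_adj_left (f : ℝ → ℝ) [DecidableRel G.Adj] :
    ∑ u : V, ∑ w : V, (if G.Adj u w then f (deg G u) else 0) = ∑ u, deg G u * f (deg G u) := by
  classical
  refine Finset.sum_congr rfl fun u _ => ?_
  rw [← Finset.sum_filter, Finset.sum_const, nsmul_eq_mul]
  congr 2
  rw [ndeg, ← card_neighborFinset_eq_degree, neighborFinset_eq_filter]
  congr!

lemma edgeSum_one : edgeSum G (fun _ _ => 1) = (G.edgeSet.ncard : ℝ) := by
  classical
  have h1 : ∑ u, deg G u = 2 * (G.edgeSet.ncard : ℝ) := by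
    have h2 := G.sum_degrees_eq_twice_card_edges
    rw [← Set.ncard_coe_finset, coe_edgeFinset] at h2
    rw [← Nat.cast_ofNat, ← Nat.cast_mul, ← h2, Nat.cast_sum]
    refine Finset.sum_congr rfl fun u _ => ?_
    unfold deg ndeg
    congr!
  unfold edgeSum
  rw [sum_adj_left fun _ => 1]
  simp only [mul_one, h1]
  ring

lemma edgeSum_pendentInd :
    edgeSum G (fun x y => pendentInd x + pendentInd y) =
      ({v : V | ndeg G v = 1}.ncard : ℝ) := by
  classical
  have h0 : ∑ u, deg G u * pendentInd (deg G u) = ({v : V | ndeg G v = 1}.ncard : ℝ) := by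
    have h1 : ∀ u, deg G u * pendentInd (deg G u) = if ndeg G u = 1 then 1 else 0 := by
      intro u
      by_cases h : ndeg G u = 1 <;> simp [deg, pendentInd, h]
    rw [Finset.sum_congr rfl fun u _ => h1 u, Finset.sum_boole, Set.ncard_eq_toFinset_card']
    congr 2
    ext; simp
  rw [edgeSum_add]
  have hl : edgeSum G (fun x _ => pendentInd x) =
      1 / 2 * ({v : V | ndeg G v = 1}.ncard : ℝ) := by
    unfold edgeSum
    rw [sum_adj_left, h0]
  have hr : edgeSum G (fun _ y => pendentInd y) = edgeSum G (fun x _ => pendentInd x) := by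
    unfold edgeSum
    rw [Finset.sum_comm]
    simp only [G.adj_comm]
  rw [hr, hl]
  ring

lemma edgeSum_affine_pendentInd (c c' : ℝ) :
    edgeSum G (fun x y => c + c' * (pendentInd x + pendentInd y)) =
      c * G.edgeSet.ncard + c' * {v : V | ndeg G v = 1}.ncard := by
  have h := edgeSum_const_mul (G := G) c fun _ _ => 1
  simp only [mul_one] at h
  rw [edgeSum_add, h, edgeSum_one, edgeSum_const_mul, edgeSum_pendentInd]

end EdgeSum

section Degrees

variable {V : Type*} [Fintype V] {G : SimpleGraph V}

lemma ndeg_eq_ncard (v : V) : ndeg G v = (G.neighborSet v).ncard := by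
  classical
  rw [ndeg, ← card_neighborFinset_eq_degree, ← Set.ncard_coe_finset, coe_neighborFinset]

lemma ndeg_pos_of_adj {u w : V} (h : G.Adj u w) : 1 ≤ ndeg G u := by
  rw [ndeg_eq_ncard]
  exact (Set.ncard_pos (Set.toFinite _)).2 ⟨w, h⟩

lemma eq_of_adj_of_ndeg_eq_one {u w z : V} (hu : ndeg G u = 1) (hw : G.Adj u w)
    (hz : G.Adj u z) : z = w := by
  rw [ndeg_eq_ncard, Set.ncard_eq_one] at hu
  obtain ⟨a, ha⟩ := hu
  have h1 : w ∈ G.neighborSet u := hw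
  have h2 : z ∈ G.neighborSet u := hz
  rw [ha] at h1 h2
  exact h2.trans h1.symm

lemma not_ndeg_eq_one_of_adj (hG : G.Connected) {v : V} (hv : 2 ≤ ndeg G v) {u w : V}
    (h : G.Adj u w) (hu : ndeg G u = 1) : ndeg G w ≠ 1 := by
  intro hw
  have hcl : ∀ a b, G.Reachable a b → (a = u ∨ a = w) → (b = u ∨ b = w) := by
    rintro a b ⟨p⟩
    induction p with
    | nil => exact id
    | cons hab _ ih =>
      rintro (rfl | rfl)
      · exact ih (Or.inr (eq_of_adj_of_ndeg_eq_one hu h hab))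
      · exact ih (Or.inl (eq_of_adj_of_ndeg_eq_one hw h.symm hab))
  rcases hcl u v (hG.preconnected u v) (Or.inl rfl) with rfl | rfl <;> omega

lemma ndeg_eq_of_iso {W : Type*} [Fintype W] {H : SimpleGraph W} (e : G ≃g H) (v : V) :
    ndeg G v = ndeg H (e v) := by
  rw [ndeg_eq_ncard, ndeg_eq_ncard]
  exact Set.ncard_congr' (e.mapNeighborSet v)

lemma ndeg_star_leaf {k : ℕ} (j : Fin k) :
    ndeg (completeBipartiteGraph (Fin 1) (Fin k)) (Sum.inr j) = 1 := by
  rw [ndeg_eq_ncard, Set.ncard_eq_one]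
  refine ⟨Sum.inl 0, ?_⟩
  ext (i | i)
  · simp [Subsingleton.elim i 0]
  · simp

lemma eq_of_iso_star {k : ℕ} (e : G ≃g completeBipartiteGraph (Fin 1) (Fin k)) {u v : V}
    (hu : ndeg G u ≠ 1) (hv : ndeg G v ≠ 1) : u = v := by
  rw [ndeg_eq_of_iso e] at hu hv
  apply e.injective
  rcases hu' : e u with i | i
  · rcases hv' : e v with j | j
    · rw [Subsingleton.elim i j]
    · rw [hv'] at hv
      exact absurd (ndeg_star_leaf j) hv
  · rw [hu'] at hu
    exact absurd (ndeg_star_leaf i) hu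

/-- The largest and the smallest non-pendent degree agree exactly when `G` is a star, regular,
or `(Δ,1)`-semiregular. -/
lemma extremal_iff {Δ δ₁ k : ℕ} (hpos : ∀ v, 1 ≤ ndeg G v)
    (hΔ : IsGreatest (Set.range (ndeg G)) Δ)
    (hδ₁ : IsLeast {d : ℕ | ∃ v : V, ndeg G v = d ∧ 2 ≤ d} δ₁) :
    Δ = δ₁ ↔ Nonempty (G ≃g completeBipartiteGraph (Fin 1) (Fin k)) ∨
      (∃ r, ∀ v : V, ndeg G v = r) ∨ IsSemiregular G Δ 1 := by
  obtain ⟨a, ha⟩ := hΔ.1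
  obtain ⟨b, hb, h2⟩ := hδ₁.1
  have hδΔ : δ₁ ≤ Δ := hΔ.2 ⟨b, hb⟩
  constructor
  · intro h
    have hdeg : ∀ v, ndeg G v ≠ 1 → ndeg G v = Δ := fun v hv =>
      le_antisymm (hΔ.2 ⟨v, rfl⟩) (h.trans_le (hδ₁.2 ⟨v, rfl, by have := hpos v; omega⟩))
    by_cases hreg : ∃ v, ndeg G v = 1
    · obtain ⟨c, hc⟩ := hreg
      refine Or.inr (Or.inr ⟨{v | ndeg G v ≠ 1}, {v | ndeg G v = 1}, ⟨a, ?_⟩, ⟨c, hc⟩,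
        ?_, ?_, hdeg, fun v hv => hv⟩)
      · simp only [Set.mem_ofPred_eq]; omega
      · exact Set.disjoint_left.2 fun v hv hv' => hv hv'
      · ext v; simp [em']
    · exact Or.inr (Or.inl ⟨Δ, fun v => hdeg v fun hv => hreg ⟨v, hv⟩⟩)
  · rintro (⟨⟨e⟩⟩ | ⟨r, hr⟩ | ⟨V₁, V₂, -, -, -, hU, h1, h1'⟩)
    · rw [← ha, ← hb, eq_of_iso_star e (u := a) (v := b) (by omega) (by omega)]
    · rw [← ha, ← hb, hr, hr]
    · rcases (hU ▸ Set.mem_univ b : b ∈ V₁ ∪ V₂) with h | h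
      · rw [← hb, h1 b h]
      · have := h1' b h
        omega

end Degrees

/-- Theorem 4 of the paper: lower bound on `AG` and characterization of equality. -/
theorem stmt6 {V : Type*} [Fintype V] (G : SimpleGraph V) (hG : G.Connected)
    (n m p Δ δ₁ : ℕ)
    (hn : Fintype.card V = n) (hm : G.edgeSet.ncard = m)
    (hp : {v : V | ndeg G v = 1}.ncard = p)
    (hΔ : IsGreatest (Set.range (ndeg G)) Δ)
    (hδ₁ : IsLeast {d : ℕ | ∃ v : V, ndeg G v = d ∧ 2 ≤ d} δ₁) :
    AG G ≥ (p : ℝ) * ((δ₁ : ℝ) + 1) / (2 * Real.sqrt δ₁) +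
      (Real.sqrt (2 * ((m : ℝ) - p) * ((Δ : ℝ) + δ₁) * Real.sqrt ((Δ : ℝ) * δ₁)) /
        ((Δ : ℝ) * ((Δ : ℝ) + δ₁ + 2 * Real.sqrt ((Δ : ℝ) * δ₁)))) *
        Real.sqrt (forgottenIndex G + 2 * (m : ℝ) * (Δ : ℝ) ^ 2 -
          p * (3 * (Δ : ℝ) ^ 2 + 1)) ∧
    (AG G = (p : ℝ) * ((δ₁ : ℝ) + 1) / (2 * Real.sqrt δ₁) +
      (Real.sqrt (2 * ((m : ℝ) - p) * ((Δ : ℝ) + δ₁) * Real.sqrt ((Δ : ℝ) * δ₁)) /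
        ((Δ : ℝ) * ((Δ : ℝ) + δ₁ + 2 * Real.sqrt ((Δ : ℝ) * δ₁)))) *
        Real.sqrt (forgottenIndex G + 2 * (m : ℝ) * (Δ : ℝ) ^ 2 -
          p * (3 * (Δ : ℝ) ^ 2 + 1)) ↔
      Nonempty (G ≃g completeBipartiteGraph (Fin 1) (Fin (n - 1))) ∨
      (∃ r, ∀ v : V, ndeg G v = r) ∨ IsSemiregular G Δ 1) := by
  obtain ⟨a, ha⟩ := hΔ.1
  obtain ⟨b, hb, h2⟩ := hδ₁.1
  have hδΔ : δ₁ ≤ Δ := hΔ.2 ⟨b, hb⟩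
  have hnt : Nontrivial V := by
    obtain ⟨c, hc⟩ : (G.neighborSet b).Nonempty := by
      rw [← Set.ncard_pos (Set.toFinite _), ← ndeg_eq_ncard]; omega
    exact ⟨b, c, G.ne_of_adj hc⟩
  have hpos : ∀ v, 1 ≤ ndeg G v := fun v => by
    obtain ⟨w, hw⟩ := hG.preconnected.exists_adj_of_nontrivial v
    exact ndeg_pos_of_adj hw
  rw [← extremal_iff hpos hΔ hδ₁]
  have hd : (2 : ℝ) ≤ δ₁ := by exact_mod_cast h2
  have hdD : (δ₁ : ℝ) ≤ Δ := by exact_mod_cast hδΔ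
  -- an adjacent pair is, up to order, pendent/non-pendent or non-pendent/non-pendent
  have hedge : ∀ P : ℝ → ℝ → Prop, (∀ x y, P x y → P y x) →
      (∀ x : ℝ, δ₁ ≤ x → x ≤ Δ → P x 1) →
      (∀ x y : ℝ, δ₁ ≤ x → x ≤ Δ → δ₁ ≤ y → y ≤ Δ → P x y) →
      ∀ u w, G.Adj u w → P (deg G u) (deg G w) := by
    intro P hsymm h1 h2' u w huw
    have hup : ∀ v, deg G v ≤ Δ := fun v => by
      unfold deg; exact_mod_cast hΔ.2 ⟨v, rfl⟩
    have hlow : ∀ v, ndeg G v ≠ 1 → (δ₁ : ℝ) ≤ deg G v := fun v hv => by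
      unfold deg; exact_mod_cast hδ₁.2 ⟨v, rfl, by have := hpos v; omega⟩
    by_cases hu : ndeg G u = 1
    · have hw := not_ndeg_eq_one_of_adj hG (hb.symm ▸ h2) huw hu
      have := hsymm _ _ (h1 _ (hlow w hw) (hup w))
      rwa [show deg G u = 1 by simp [deg, hu]]
    · by_cases hw : ndeg G w = 1
      · rw [show deg G w = 1 by simp [deg, hw]]
        exact h1 _ (hlow u hu) (hup u)
      · exact h2' _ _ (hlow u hu) (hup u) (hlow w hw) (hup w)
  have hq : agTerm δ₁ 1 = ((δ₁ : ℝ) + 1) / (2 * Real.sqrt δ₁) := agTerm_one_right (by linarith)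
  have hAff : ∀ c c' : ℝ, edgeSum G (fun x y => c + c' * (pendentInd x + pendentInd y)) =
      c * m + c' * p := fun c c' => by
    rw [edgeSum_affine_pendentInd, hm, hp]
  have hAGle : ∀ u w, G.Adj u w →
      1 + (agTerm δ₁ 1 - 1) * (pendentInd (deg G u) + pendentInd (deg G w)) ≤
        agTerm (deg G u) (deg G w) := by
    refine hedge (fun x y => 1 + (agTerm δ₁ 1 - 1) * (pendentInd x + pendentInd y) ≤
      agTerm x y) (fun x y h => by rwa [agTerm_comm y, add_comm (pendentInd y)])
      (fun x hx _ => ?_) fun x y hx _ hy _ => ?_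
    · rw [pendentInd_one, pendentInd_of_ne (by linarith)]
      have := agTerm_one_le (by linarith) hx
      linarith
    · rw [pendentInd_of_ne (by linarith), pendentInd_of_ne (by linarith)]
      have := one_le_agTerm (x := x) (y := y) (by linarith) (by linarith)
      linarith
  have hAG : m + (agTerm δ₁ 1 - 1) * p ≤ AG G := by
    have := edgeSum_mono
        (f := fun x y => 1 + (agTerm δ₁ 1 - 1) * (pendentInd x + pendentInd y))
        (g := agTerm) hAGle
    rw [hAff, one_mul] at this
    exact this
  have hF : forgottenIndex G ≤ 2 * (Δ : ℝ) ^ 2 * m + (1 - (Δ : ℝ) ^ 2) * p := by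
    rw [← hAff]
    refine edgeSum_mono (hedge (fun x y => x ^ 2 + y ^ 2 ≤ 2 * (Δ : ℝ) ^ 2 +
      (1 - (Δ : ℝ) ^ 2) * (pendentInd x + pendentInd y))
      (fun x y h => by linarith) (fun x hx hx' => ?_) fun x y hx hx' hy hy' => ?_)
    · rw [pendentInd_one, pendentInd_of_ne (by linarith)]
      nlinarith
    · rw [pendentInd_of_ne (by linarith), pendentInd_of_ne (by linarith)]
      nlinarith
  have hpend : ∀ u w, G.Adj u w →
      0 + 1 * (pendentInd (deg G u) + pendentInd (deg G w)) ≤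
        1 + 0 * (pendentInd (deg G u) + pendentInd (deg G w)) := by
    refine hedge (fun x y => 0 + 1 * (pendentInd x + pendentInd y) ≤
      1 + 0 * (pendentInd x + pendentInd y))
      (fun x y h => by linarith) (fun x hx _ => ?_) fun x y hx _ hy _ => ?_
    · rw [pendentInd_one, pendentInd_of_ne (by linarith)]
      norm_num
    · rw [pendentInd_of_ne (by linarith), pendentInd_of_ne (by linarith)]
      norm_num
  have hk : 0 ≤ (m : ℝ) - p := by
    have := edgeSum_mono
        (f := fun x y => 0 + 1 * (pendentInd x + pendentInd y))
        (g := fun x y => 1 + 0 * (pendentInd x + pendentInd y)) hpend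
    rw [hAff, hAff] at this
    linarith
  set X := forgottenIndex G + 2 * (m : ℝ) * (Δ : ℝ) ^ 2 - p * (3 * (Δ : ℝ) ^ 2 + 1) with hXdef
  have hX : X ≤ 4 * (Δ : ℝ) ^ 2 * ((m : ℝ) - p) := by linarith
  have hT := sqrt_div_mul_sqrt_le (by linarith) hdD hk hX
  rw [mul_div_assoc, ← hq]
  refine ⟨by linarith, fun h => ?_, fun h => ?_⟩
  · rcases hk.eq_or_lt with hk0 | hk0
    · obtain ⟨w, hw⟩ := hG.preconnected.exists_adj_of_nontrivial a
      have h1 := eq_of_edgeSum_eq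
        (f := fun x y => 0 + 1 * (pendentInd x + pendentInd y))
        (g := fun x y => 1 + 0 * (pendentInd x + pendentInd y)) hpend (by rw [hAff, hAff]; linarith) hw
      have h3 := eq_of_edgeSum_eq
        (f := fun x y => 1 + (agTerm δ₁ 1 - 1) * (pendentInd x + pendentInd y))
        (g := agTerm) hAGle (by
        rw [hAff]
        change _ = AG G
        linarith) hw
      have hda : deg G a = Δ := by rw [deg, ha]
      rw [hda, pendentInd_of_ne (by linarith)] at h1 h3
      by_cases hw1 : deg G w = 1
      · rw [hw1, pendentInd_one] at h3
        by_contra hne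
        have := agTerm_one_lt (x := δ₁) (y := Δ) (by linarith)
          (lt_of_le_of_ne hdD (by exact_mod_cast Ne.symm hne))
        linarith
      · rw [pendentInd_of_ne hw1] at h1
        norm_num at h1
    · exact_mod_cast eq_of_sqrt_div_mul_sqrt_eq (by linarith) hdD hk0 hX (by linarith)
  · have hΔδ : (Δ : ℝ) = δ₁ := by exact_mod_cast h
    have hAG' : AG G = m + (agTerm δ₁ 1 - 1) * p := by
      rw [← one_mul (m : ℝ), ← hAff]
      refine edgeSum_congr (hedge (fun x y => agTerm x y = 1 + (agTerm δ₁ 1 - 1) *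
        (pendentInd x + pendentInd y)) (fun x y h => by rwa [agTerm_comm y, add_comm (pendentInd y)])
        (fun x hx hx' => ?_) fun x y hx hx' hy hy' => ?_)
      · obtain rfl : x = δ₁ := by linarith
        rw [pendentInd_one, pendentInd_of_ne (by linarith)]
        ring
      · obtain rfl : x = δ₁ := by linarith
        obtain rfl : y = δ₁ := by linarith
        rw [pendentInd_of_ne (by linarith), agTerm_self (by linarith)]
        ring
    have hF' : forgottenIndex G = 2 * (Δ : ℝ) ^ 2 * m + (1 - (Δ : ℝ) ^ 2) * p := by
      rw [← hAff]
      refine edgeSum_congr (hedge (fun x y => x ^ 2 + y ^ 2 = 2 * (Δ : ℝ) ^ 2 +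
        (1 - (Δ : ℝ) ^ 2) * (pendentInd x + pendentInd y))
        (fun x y h => by linarith) (fun x hx hx' => ?_) fun x y hx hx' hy hy' => ?_)
      · obtain rfl : x = Δ := by linarith
        rw [pendentInd_one, pendentInd_of_ne (by linarith)]
        ring
      · obtain rfl : x = Δ := by linarith
        obtain rfl : y = Δ := by linarith
        rw [pendentInd_of_ne (by linarith)]
        ring
    have hX' : X = 4 * (Δ : ℝ) ^ 2 * ((m : ℝ) - p) := by linarith
    rw [hX', hAG', ← hΔδ, sqrt_div_mul_sqrt_self (by linarith) hk]
    ring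
end

section
/- Let G be a finite simple connected graph of order n with minimum degree δ. Then GA(G) ≤ AG(G) ≤ ((δ+n−1)²/(4δ(n−1)))·GA(G); the left equality holds if and only if G is regular, and the right equality holds if and only if G is isomorphic to the star K_{1,n−1} or to the complete graph K_n. -/
open SimpleGraph

theorem ndeg_eq_degree {V : Type*} [Fintype V] (G : SimpleGraph V) (v : V)
    [Fintype (G.neighborSet v)] : ndeg G v = G.degree v := by
  unfold ndeg
  congr!

section EdgeSum

variable {V : Type*} [Fintype V] {G : SimpleGraph V} {f g : ℝ → ℝ → ℝ}

theorem mul_edgeSum (c : ℝ) : c * edgeSum G f = edgeSum G (fun x y => c * f x y) := by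
  simp only [edgeSum, mul_left_comm c, Finset.mul_sum, mul_ite, mul_zero]

theorem edgeSum_le_edgeSum (h : ∀ u w, G.Adj u w → f (deg G u) (deg G w) ≤ g (deg G u) (deg G w)) :
    edgeSum G f ≤ edgeSum G g := by
  unfold edgeSum
  gcongr with u _ w _
  split_ifs with huw
  · exact h u w huw
  · rfl

theorem edgeSum_eq_edgeSum_iff
    (h : ∀ u w, G.Adj u w → f (deg G u) (deg G w) ≤ g (deg G u) (deg G w)) :
    edgeSum G f = edgeSum G g ↔
      ∀ u w, G.Adj u w → f (deg G u) (deg G w) = g (deg G u) (deg G w) := by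
  classical
  have hle : ∀ u w, (if G.Adj u w then f (deg G u) (deg G w) else 0) ≤
      if G.Adj u w then g (deg G u) (deg G w) else 0 := by
    intro u w
    split_ifs with huw
    · exact h u w huw
    · rfl
  have key : edgeSum G f = edgeSum G g ↔
      ∑ u, ∑ w, (if G.Adj u w then f (deg G u) (deg G w) else 0) =
        ∑ u, ∑ w, if G.Adj u w then g (deg G u) (deg G w) else 0 := by
    unfold edgeSum
    rw [mul_right_inj' (by norm_num)]
  rw [key, Finset.sum_eq_sum_iff_of_le fun u _ => Finset.sum_le_sum fun w _ => hle u w]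
  refine forall_congr' fun u => ?_
  rw [Finset.sum_eq_sum_iff_of_le fun w _ => hle u w]
  simp only [Finset.mem_univ, forall_const]
  refine forall_congr' fun w => ?_
  split_ifs with huw <;> simp [huw]

end EdgeSum

section Terms

variable {x y a b : ℝ}

theorem sqrt_div_add_sqrt_div (hx : 0 < x) (hy : 0 < y) :
    √(x / y) + √(y / x) = (x + y) / √(x * y) := by
  have hx' := Real.sqrt_pos.2 hx
  have hy' := Real.sqrt_pos.2 hy
  rw [Real.sqrt_div hx.le, Real.sqrt_div hy.le, Real.sqrt_mul hx.le]
  field_simp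
  rw [Real.sq_sqrt hx.le, Real.sq_sqrt hy.le]

theorem mul_ga_sub_ag (hx : 0 < x) (hy : 0 < y) (c : ℝ) :
    c * (2 * √(x * y) / (x + y)) - (√(x / y) + √(y / x)) / 2 =
      (c * (4 * (x * y)) - (x + y) ^ 2) / (2 * √(x * y) * (x + y)) := by
  have hs : 0 < √(x * y) := Real.sqrt_pos.2 (mul_pos hx hy)
  have hsq : √(x * y) ^ 2 = x * y := Real.sq_sqrt (mul_pos hx hy).le
  rw [sqrt_div_add_sqrt_div hx hy]
  field_simp
  rw [hsq]
  ring

theorem ag_le_mul_ga_iff (hx : 0 < x) (hy : 0 < y) (c : ℝ) :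
    (√(x / y) + √(y / x)) / 2 ≤ c * (2 * √(x * y) / (x + y)) ↔
      (x + y) ^ 2 ≤ c * (4 * (x * y)) := by
  have hs : 0 < √(x * y) := Real.sqrt_pos.2 (mul_pos hx hy)
  rw [← sub_nonneg, mul_ga_sub_ag hx hy, le_div_iff₀ (by positivity), zero_mul, sub_nonneg]

theorem ag_eq_mul_ga_iff (hx : 0 < x) (hy : 0 < y) (c : ℝ) :
    (√(x / y) + √(y / x)) / 2 = c * (2 * √(x * y) / (x + y)) ↔
      (x + y) ^ 2 = c * (4 * (x * y)) := by
  have hs : 0 < √(x * y) := Real.sqrt_pos.2 (mul_pos hx hy)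
  have hne : 2 * √(x * y) * (x + y) ≠ 0 := by positivity
  rw [eq_comm, ← sub_eq_zero, mul_ga_sub_ag hx hy, div_eq_zero_iff, or_iff_left hne, sub_eq_zero,
    eq_comm]

theorem ga_le_ag (hx : 0 < x) (hy : 0 < y) :
    2 * √(x * y) / (x + y) ≤ (√(x / y) + √(y / x)) / 2 := by
  have hs : 0 < √(x * y) := Real.sqrt_pos.2 (mul_pos hx hy)
  have h := mul_ga_sub_ag hx hy 1
  have : (1 * (4 * (x * y)) - (x + y) ^ 2) / (2 * √(x * y) * (x + y)) ≤ 0 :=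
    div_nonpos_of_nonpos_of_nonneg (by nlinarith [sq_nonneg (x - y)]) (by positivity)
  linarith

theorem ga_eq_ag_iff (hx : 0 < x) (hy : 0 < y) :
    2 * √(x * y) / (x + y) = (√(x / y) + √(y / x)) / 2 ↔ x = y := by
  have h := ag_eq_mul_ga_iff hx hy 1
  rw [one_mul] at h
  rw [eq_comm, h, ← sub_eq_zero, show (x + y) ^ 2 - 1 * (4 * (x * y)) = (x - y) ^ 2 by ring,
    sq_eq_zero_iff, sub_eq_zero]

theorem bound_mul_sub_sq (ha : a ≠ 0) (hb : b ≠ 0) :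
    (a + b) ^ 2 / (4 * a * b) * (4 * (x * y)) - (x + y) ^ 2 =
      (b * y - a * x) * (b * x - a * y) / (a * b) := by
  field_simp
  ring

theorem ag_le_bound_mul_ga (ha : 0 < a) (hax : a ≤ x) (hay : a ≤ y) (hxb : x ≤ b) (hyb : y ≤ b) :
    (√(x / y) + √(y / x)) / 2 ≤ (a + b) ^ 2 / (4 * a * b) * (2 * √(x * y) / (x + y)) := by
  have hx := ha.trans_le hax
  have hy := ha.trans_le hay
  have hb := hx.trans_le hxb
  rw [ag_le_mul_ga_iff hx hy, ← sub_nonneg, bound_mul_sub_sq ha.ne' hb.ne']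
  exact div_nonneg (mul_nonneg (by nlinarith) (by nlinarith)) (by positivity)

theorem ag_eq_bound_mul_ga_iff (ha : 0 < a) (hax : a ≤ x) (hay : a ≤ y) (hxb : x ≤ b)
    (hyb : y ≤ b) :
    (√(x / y) + √(y / x)) / 2 = (a + b) ^ 2 / (4 * a * b) * (2 * √(x * y) / (x + y)) ↔
      x = b ∧ y = a ∨ x = a ∧ y = b := by
  have hx := ha.trans_le hax
  have hy := ha.trans_le hay
  have hb := hx.trans_le hxb
  rw [ag_eq_mul_ga_iff hx hy, eq_comm, ← sub_eq_zero, bound_mul_sub_sq ha.ne' hb.ne',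
    div_eq_zero_iff, or_iff_left (by positivity), mul_eq_zero]
  refine or_congr ⟨fun h => ⟨?_, ?_⟩, ?_⟩ ⟨fun h => ⟨?_, ?_⟩, ?_⟩
  · nlinarith
  · nlinarith
  · rintro ⟨rfl, rfl⟩; ring
  · nlinarith
  · nlinarith
  · rintro ⟨rfl, rfl⟩; ring

end Terms

namespace SimpleGraph

variable {V : Type*} [Fintype V] {G : SimpleGraph V}

theorem ndeg_le_card_sub_one (v : V) : ndeg G v ≤ Fintype.card V - 1 := by
  classical
  rw [ndeg_eq_degree]
  exact Nat.le_sub_one_of_lt (G.degree_lt_card_verts v)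

theorem ndeg_eq_card_sub_one_iff (v : V) :
    ndeg G v = Fintype.card V - 1 ↔ G.IsUniversal v := by
  classical
  rw [ndeg_eq_degree, degree_eq_card_sub_one]

theorem nonempty_iso_top_iff {n : ℕ} (hn : Fintype.card V = n) :
    Nonempty (G ≃g (⊤ : SimpleGraph (Fin n))) ↔ ∀ v, G.IsUniversal v := by
  rw [← eq_top_iff_forall_isUniversal]
  constructor
  · rintro ⟨e⟩
    ext u v
    rw [← e.map_adj_iff]
    simp
  · rintro rfl
    exact ⟨Iso.completeGraph (Fintype.equivFinOfCardEq hn)⟩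

theorem nonempty_iso_star_iff {n : ℕ} (hn : Fintype.card V = n) :
    Nonempty (G ≃g completeBipartiteGraph (Fin 1) (Fin (n - 1))) ↔
      ∃ c, ∀ u v, G.Adj u v ↔ u ≠ v ∧ (u = c ∨ v = c) := by
  classical
  constructor
  · rintro ⟨e⟩
    refine ⟨e.symm (Sum.inl 0), fun u v => ?_⟩
    rw [← e.map_adj_iff, ← e.injective.ne_iff, ← e.injective.eq_iff, ← e.injective.eq_iff,
      RelIso.apply_symm_apply]
    rcases e u with i | i <;> rcases e v with j | j <;>
      simp [completeBipartiteGraph, eq_iff_true_of_subsingleton]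
  · rintro ⟨c, hc⟩
    let e : V ≃ Fin 1 ⊕ Fin (n - 1) := (Equiv.sumCompl (· = c)).symm.trans
      (Equiv.sumCongr (Fintype.equivFinOfCardEq (by simp))
        (Fintype.equivFinOfCardEq (by simp [Fintype.card_subtype_compl, hn])))
    have hl : ∀ v, (e v).isLeft = decide (v = c) := by
      intro v
      by_cases h : v = c <;> simp [e, h]
    refine ⟨e, fun {u v} => ?_⟩
    simp only [completeBipartiteGraph, ← Sum.not_isLeft, hl, hc]
    by_cases hu : u = c <;> by_cases hv : v = c <;> simp_all [eq_comm]

theorem Preconnected.forall_eq_of_adj {α : Type*} {V : Type*} {G : SimpleGraph V}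
    (hG : G.Preconnected) {f : V → α} (h : ∀ u v, G.Adj u v → f u = f v) (u v : V) :
    f u = f v := by
  obtain ⟨p⟩ := hG u v
  induction p with
  | nil => rfl
  | cons huv _ ih => exact (h _ _ huv).trans ih

/-- In a connected graph, all edges join a vertex of minimum degree to a universal one iff the graph
is a star or complete. -/
theorem forall_adj_ndeg_iff {n δ : ℕ} (hG : G.Connected) (hn : Fintype.card V = n) (hn2 : 2 ≤ n)
    (hδ : IsLeast (Set.range (ndeg G)) δ) :
    (∀ u v, G.Adj u v → ndeg G u = n - 1 ∧ ndeg G v = δ ∨ ndeg G u = δ ∧ ndeg G v = n - 1) ↔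
      (∃ c, ∀ u v, G.Adj u v ↔ u ≠ v ∧ (u = c ∨ v = c)) ∨ ∀ v, G.IsUniversal v := by
  classical
  subst hn
  have : Nontrivial V := Fintype.one_lt_card_iff_nontrivial.1 hn2
  constructor
  · intro h
    obtain ⟨w⟩ := hG.nonempty
    obtain ⟨w', hw⟩ := hG.preconnected.exists_adj_of_nontrivial w
    obtain ⟨c, hc⟩ : ∃ c, ndeg G c = Fintype.card V - 1 := by
      rcases h w w' hw with h | h
      exacts [⟨w, h.1⟩, ⟨w', h.2⟩]
    have hcu := (ndeg_eq_card_sub_one_iff c).1 hc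
    by_cases hδn : δ = Fintype.card V - 1
    · right
      intro v
      rw [← ndeg_eq_card_sub_one_iff]
      exact le_antisymm (ndeg_le_card_sub_one v) (hδn ▸ hδ.2 ⟨v, rfl⟩)
    · left
      have huniq : ∀ u, ndeg G u = Fintype.card V - 1 → u = c := by
        intro u hu
        by_contra hne
        have := h _ _ (hcu (Ne.symm hne))
        omega
      refine ⟨c, fun u v => ⟨fun huv => ⟨huv.ne, ?_⟩, ?_⟩⟩
      · rcases h u v huv with h | h
        exacts [.inl (huniq u h.1), .inr (huniq v h.2)]
      · rintro ⟨hne, rfl | rfl⟩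
        exacts [hcu hne, (hcu hne.symm).symm]
  · rintro (⟨c, hc⟩ | h) u v huv
    · have hcdeg : ndeg G c = Fintype.card V - 1 :=
        (ndeg_eq_card_sub_one_iff c).2 fun w hw => (hc c w).2 ⟨hw, .inl rfl⟩
      have hleaf : ∀ w, w ≠ c → ndeg G w = 1 := by
        intro w hw
        rw [ndeg_eq_degree, degree_eq_one_iff_existsUnique_adj]
        exact ⟨c, (hc w c).2 ⟨hw, .inr rfl⟩, fun y hy => (((hc w y).1 hy).2).resolve_left hw⟩
      have hδ1 : δ = 1 := by
        obtain ⟨w, hw⟩ := exists_ne c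
        obtain ⟨⟨z, rfl⟩, hmin⟩ := hδ
        by_cases hz : z = c
        · have := hmin ⟨w, rfl⟩
          rw [hleaf w hw] at this
          subst hz
          omega
        · exact hleaf z hz
      rcases (hc u v).1 huv with ⟨hne, rfl | rfl⟩
      · exact .inl ⟨hcdeg, hδ1 ▸ hleaf v hne.symm⟩
      · exact .inr ⟨hδ1 ▸ hleaf u hne, hcdeg⟩
    · have hd := fun v => (ndeg_eq_card_sub_one_iff v).2 (h v)
      obtain ⟨z, rfl⟩ := hδ.1
      simp [hd]

end SimpleGraph

/-- Theorem 7 of the paper: comparison of `GA` and `AG`. -/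
theorem stmt10 {V : Type*} [Fintype V] (G : SimpleGraph V) (hG : G.Connected)
    (n δ : ℕ) (hn : Fintype.card V = n) (hn2 : 2 ≤ n)
    (hδ : IsLeast (Set.range (ndeg G)) δ) :
    (GA G ≤ AG G ∧
      AG G ≤ (((δ : ℝ) + n - 1) ^ 2 / (4 * (δ : ℝ) * ((n : ℝ) - 1))) * GA G) ∧
    (GA G = AG G ↔ ∃ r, ∀ v : V, ndeg G v = r) ∧
    (AG G = (((δ : ℝ) + n - 1) ^ 2 / (4 * (δ : ℝ) * ((n : ℝ) - 1))) * GA G ↔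
      Nonempty (G ≃g completeBipartiteGraph (Fin 1) (Fin (n - 1))) ∨
      Nonempty (G ≃g (⊤ : SimpleGraph (Fin n)))) := by
  classical
  have : Nontrivial V := Fintype.one_lt_card_iff_nontrivial.1 (hn ▸ hn2)
  have hcast : ((n - 1 : ℕ) : ℝ) = (n : ℝ) - 1 := by
    rw [Nat.cast_sub (by omega), Nat.cast_one]
  have hδ0 : (0 : ℝ) < δ := by
    obtain ⟨z, rfl⟩ := hδ.1
    rw [ndeg_eq_degree]
    exact_mod_cast hG.preconnected.degree_pos_of_nontrivial z
  have hlow : ∀ v, (δ : ℝ) ≤ deg G v := fun v => Nat.cast_le.2 (hδ.2 ⟨v, rfl⟩)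
  have hpos : ∀ v, 0 < deg G v := fun v => hδ0.trans_le (hlow v)
  have hup : ∀ v, deg G v ≤ (n : ℝ) - 1 := fun v => by
    rw [← hcast, ← hn]
    exact Nat.cast_le.2 (ndeg_le_card_sub_one v)
  have hle := fun u w (_ : G.Adj u w) => ga_le_ag (hpos u) (hpos w)
  have hle' := fun u w (_ : G.Adj u w) =>
    ag_le_bound_mul_ga hδ0 (hlow u) (hlow w) (hup u) (hup w)
  rw [add_sub_assoc, GA, AG, mul_edgeSum]
  refine ⟨⟨edgeSum_le_edgeSum hle, edgeSum_le_edgeSum hle'⟩, ?_, ?_⟩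
  · rw [edgeSum_eq_edgeSum_iff hle]
    simp only [ga_eq_ag_iff (hpos _) (hpos _)]
    constructor
    · intro h
      obtain ⟨z⟩ := hG.nonempty
      exact ⟨ndeg G z, fun v => hG.preconnected.forall_eq_of_adj
        (fun u w huw => Nat.cast_injective (h u w huw)) v z⟩
    · rintro ⟨r, hr⟩ u w -
      simp [deg, hr]
  · rw [edgeSum_eq_edgeSum_iff hle', nonempty_iso_star_iff hn, nonempty_iso_top_iff hn,
      ← forall_adj_ndeg_iff hG hn hn2 hδ]
    simp only [ag_eq_bound_mul_ga_iff hδ0 (hlow _) (hlow _) (hup _) (hup _)]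
    simp only [← hcast, deg, Nat.cast_inj]
end

section
/- Let G be a finite simple graph and let e = v_i v_j be a pendent edge of G, where v_i has degree 1 and v_j is a non-pendent vertex (degree d_j ≥ 2). Let d_max^(j) denote the maximum degree among the neighbors of v_j other than v_i. If either (i) every neighbor of v_j other than v_i has degree at least d_j, or (ii) √(d_max^(j)) / (2·√(d_j − 1/2 + 6·d_max^(j))) ≤ √(d_j)/(d_j + 1), then GA(G) > GA(G − e), where G − e is the graph obtained from G by deleting the edge e. -/
open SimpleGraph

lemma ga_term_mono {a x : ℝ} (ha : 0 < a) (hx : a + 1 ≤ x) :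
    2 * √(a * x) / (a + x) ≤ 2 * √((a + 1) * x) / (a + 1 + x) := by
  have hx0 : 0 < x := by linarith
  rw [Real.sqrt_mul ha.le, Real.sqrt_mul (by linarith), div_le_div_iff₀ (by linarith) (by linarith)]
  have hs := Real.sq_sqrt ha.le
  have ht := Real.sq_sqrt (show 0 ≤ a + 1 by linarith)
  have hst : √a ≤ √(a + 1) := Real.sqrt_le_sqrt (by linarith)
  have hy := Real.sqrt_nonneg x
  set s := √a
  set t := √(a + 1)
  have hstx : s * t ≤ x := by
    linarith [mul_le_mul_of_nonneg_right hst (Real.sqrt_nonneg (a + 1))]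
  have key : s * (a + 1 + x) ≤ t * (a + x) := by
    rw [← hs] at ht ⊢
    rw [← ht]
    nlinarith [mul_nonneg (sub_nonneg.2 hst) (sub_nonneg.2 hstx)]
  linarith [mul_le_mul_of_nonneg_left key hy]

lemma mul_sq_sub_mul_lt_add_pow_four {p x : ℝ} (hp : 0 < p) (hx : 0 < x) :
    p * (p - x) ^ 2 * (p + 6 * x) < (p + x) ^ 4 := by
  have h : 0 < x ^ 2 * ((x - p) ^ 2 + 16 * p ^ 2) := by positivity
  linarith

lemma mul_ga_term_sub_lt {a x : ℝ} (ha : 1 ≤ a) (hx0 : 0 < x) :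
    a * (2 * √(a * x) / (a + x) - 2 * √((a + 1) * x) / (a + 1 + x)) <
      √x / √(a + 1 / 2 + 6 * x) := by
  have ha0 : 0 < a := by linarith
  rw [Real.sqrt_mul ha0.le, Real.sqrt_mul (by linarith)]
  have hs := Real.sq_sqrt ha0.le
  have ht := Real.sq_sqrt (show 0 ≤ a + 1 by linarith)
  have hq := Real.sq_sqrt (show 0 ≤ a + 1 / 2 + 6 * x by linarith)
  have hs0 : 0 < √a := Real.sqrt_pos.2 ha0
  have ht0 : 0 < √(a + 1) := Real.sqrt_pos.2 (by linarith)
  have hq0 : 0 < √(a + 1 / 2 + 6 * x) := Real.sqrt_pos.2 (by linarith)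
  have hy0 : 0 < √x := Real.sqrt_pos.2 hx0
  generalize √a = s at *
  generalize √(a + 1) = t at *
  generalize √(a + 1 / 2 + 6 * x) = q at *
  generalize √x = y at *
  have hp0 : 0 < s * t := by positivity
  have hp2 : (s * t) ^ 2 = a * (a + 1) := by rw [mul_pow, hs, ht]
  have hpa : a ≤ s * t := by
    refine (sq_le_sq₀ ha0.le hp0.le).1 ?_
    linarith
  have hpm : s * t ≤ a + 1 / 2 := by
    refine (sq_le_sq₀ hp0.le (by linarith)).1 ?_
    linarith
  have hst2 : (s + t) ^ 2 = 2 * (a + 1 / 2) + 2 * (s * t) := by linear_combination hs + ht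
  have hdiff : (s + t) * (s * (a + 1 + x) - t * (a + x)) = s * t - x := by
    linear_combination (a + 1 + x) * hs - (a + x) * ht
  generalize s * t = p at *
  have hprod : (a + x) * (a + 1 + x) = x ^ 2 + 2 * (a + 1 / 2) * x + p ^ 2 := by
    rw [hp2]; ring
  have hsq : (p + x) ^ 2 ≤ (a + x) * (a + 1 + x) := by
    linarith [mul_le_mul_of_nonneg_right hpm hx0.le]
  have ham : a ^ 2 * (a + 1 / 2) ≤ p ^ 3 := by
    have : p ^ 3 = a * (a + 1) * p := by rw [← hp2]; ring
    have : a * (a + 1) * a ≤ a * (a + 1) * p := by gcongr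
    linarith [sq_nonneg a]
  have hlin : a ^ 2 * (a + 1 / 2 + 6 * x) ≤ p ^ 2 * (p + 6 * x) := by
    linarith [mul_le_mul_of_nonneg_right (pow_le_pow_left₀ ha0.le hpa 2) hx0.le]
  have hmain : 2 * a * (p - x) * q < (s + t) * ((a + x) * (a + 1 + x)) := by
    apply lt_of_pow_lt_pow_left₀ 2 (by positivity)
    calc (2 * a * (p - x) * q) ^ 2
        = 4 * (p - x) ^ 2 * (a ^ 2 * (a + 1 / 2 + 6 * x)) := by rw [← hq]; ring
      _ ≤ 4 * (p - x) ^ 2 * (p ^ 2 * (p + 6 * x)) := by gcongr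
      _ = 4 * p * (p * (p - x) ^ 2 * (p + 6 * x)) := by ring
      _ < 4 * p * (p + x) ^ 4 := by
        gcongr
        exact mul_sq_sub_mul_lt_add_pow_four hp0 hx0
      _ ≤ (s + t) ^ 2 * (p + x) ^ 4 := by
        gcongr
        linarith
      _ = (s + t) ^ 2 * ((p + x) ^ 2) ^ 2 := by ring
      _ ≤ (s + t) ^ 2 * ((a + x) * (a + 1 + x)) ^ 2 := by gcongr
      _ = _ := by ring
  rw [lt_div_iff₀ hq0]
  have heq : a * (2 * (s * y) / (a + x) - 2 * (t * y) / (a + 1 + x)) * q =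
      y * (2 * a * (p - x) * q / ((s + t) * ((a + x) * (a + 1 + x)))) := by
    rw [← hdiff]
    field_simp
  rw [heq]
  have : 2 * a * (p - x) * q / ((s + t) * ((a + x) * (a + 1 + x))) < 1 :=
    (div_lt_one (by positivity)).2 hmain
  exact mul_lt_of_lt_one_right hy0 this

lemma sqrt_div_sqrt_add_mono {c x y : ℝ} (hc : 0 < c) (hx : 0 ≤ x) (hxy : x ≤ y) :
    √x / √(c + 6 * x) ≤ √y / √(c + 6 * y) := by
  rw [← Real.sqrt_div hx, ← Real.sqrt_div (hx.trans hxy)]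
  apply Real.sqrt_le_sqrt
  rw [div_le_div_iff₀ (by linarith) (by linarith)]
  nlinarith

lemma ndeg_eq_card {V : Type*} [Fintype V] (G : SimpleGraph V) (v : V) (s : Finset V)
    (h : ∀ w, w ∈ s ↔ G.Adj v w) : ndeg G v = s.card := by
  classical
  unfold ndeg
  rw [← SimpleGraph.card_neighborFinset_eq_degree]
  congr 1
  ext w
  simp [h]

lemma sum_sum_eq_two_mul_of_symm {V : Type*} [Fintype V] (D : V → V → ℝ) (j : V)
    (hsymm : ∀ u w, D u w = D w u) (hjj : D j j = 0)
    (hzero : ∀ u w, u ≠ j → w ≠ j → D u w = 0) :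
    ∑ u, ∑ w, D u w = 2 * ∑ w, D j w := by
  classical
  have hrow : ∀ u ∈ Finset.univ.erase j, ∑ w, D u w = D j u := by
    intro u hu
    rw [Finset.sum_eq_single j (fun w _ hw => hzero u w (Finset.ne_of_mem_erase hu) hw) (by simp),
      hsymm]
  rw [← Finset.add_sum_erase _ _ (Finset.mem_univ j), Finset.sum_congr rfl hrow, two_mul,
    ← Finset.add_sum_erase _ (fun w => D j w) (Finset.mem_univ j), hjj]
  ring

/-- Theorem 12 of the paper: sufficient conditions for `GA(G) > GA(G − e)` when `e = v_i v_j`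
is a pendent edge with pendent vertex `v_i` and non-pendent vertex `v_j`. -/
theorem stmt17 {V : Type*} [Fintype V] (G : SimpleGraph V) (vi vj : V)
    (he : G.Adj vi vj) (hvi : ndeg G vi = 1) (hvj : 2 ≤ ndeg G vj)
    (dmaxj : ℕ)
    (hdmaxj : IsGreatest {d : ℕ | ∃ u, G.Adj vj u ∧ u ≠ vi ∧ ndeg G u = d} dmaxj)
    (hcond :
      (∀ u, G.Adj vj u → u ≠ vi → ndeg G vj ≤ ndeg G u) ∨
      Real.sqrt (dmaxj : ℝ) /
          (2 * Real.sqrt ((ndeg G vj : ℝ) - 1 / 2 + 6 * (dmaxj : ℝ))) ≤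
        Real.sqrt (ndeg G vj : ℝ) / ((ndeg G vj : ℝ) + 1)) :
    GA (G.deleteEdges {s(vi, vj)}) < GA G := by
  classical
  set G' := G.deleteEdges {s(vi, vj)} with hG'
  set d := ndeg G vj with hd
  have hne : vi ≠ vj := he.ne
  have hadj : ∀ u w, G'.Adj u w ↔ G.Adj u w ∧ ¬(u = vi ∧ w = vj ∨ u = vj ∧ w = vi) := by
    intro u w
    simp [hG', SimpleGraph.deleteEdges_adj]
  have hN : ∀ w, G.Adj vi w → w = vj := by
    intro w hw
    rw [ndeg_eq_card G vi (Finset.univ.filter (G.Adj vi)) (by simp), Finset.card_eq_one] at hvi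
    obtain ⟨z, hz⟩ := hvi
    have h1 : w ∈ Finset.univ.filter (G.Adj vi) := by simpa using hw
    have h2 : vj ∈ Finset.univ.filter (G.Adj vi) := by simpa using he
    rw [hz, Finset.mem_singleton] at h1 h2
    rw [h1, h2]
  have hdeg : ∀ u, u ≠ vi → u ≠ vj → deg G' u = deg G u := by
    intro u hui huj
    unfold deg
    rw [ndeg_eq_card G' u (Finset.univ.filter (G.Adj u)) (by simp [hadj, hui, huj]),
      ndeg_eq_card G u (Finset.univ.filter (G.Adj u)) (by simp)]
  set S : Finset V := (Finset.univ.filter (G.Adj vj)).erase vi with hS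
  have hcard : S.card + 1 = d := by
    rw [hS, Finset.card_erase_add_one (by simpa using he.symm), hd,
      ndeg_eq_card G vj (Finset.univ.filter (G.Adj vj)) (by simp)]
  have hmemS : ∀ w, w ∈ S ↔ w ≠ vi ∧ G.Adj vj w := by simp [hS]
  have hdegj' : deg G' vj = (S.card : ℝ) := by
    unfold deg
    rw [ndeg_eq_card G' vj S (by
      intro w
      simp only [hmemS, hadj, hne.symm, false_and, true_and, false_or]
      tauto)]
  have hdegj : deg G vj = (S.card : ℝ) + 1 := by
    unfold deg
    rw [← hd, ← hcard]
    push_cast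
    rfl
  set a : ℝ := (S.card : ℝ) with ha
  have ha1 : 1 ≤ a := by
    have : 1 ≤ S.card := by omega
    rw [ha]
    exact_mod_cast this
  have hdegi : deg G vi = 1 := by simp [deg, hvi]
  set f : ℝ → ℝ → ℝ := fun x y => 2 * √(x * y) / (x + y) with hf
  have hfsymm : ∀ x y, f x y = f y x := fun x y => by simp only [hf, mul_comm x y, add_comm x y]
  set D : V → V → ℝ := fun u w =>
    (if G.Adj u w then f (deg G u) (deg G w) else 0) -
      (if G'.Adj u w then f (deg G' u) (deg G' w) else 0) with hD
  have hdiff : GA G - GA G' = ∑ w, D vj w := by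
    have h2 := sum_sum_eq_two_mul_of_symm D vj
      (fun u w => by
        simp only [hD, G.adj_comm u w, G'.adj_comm u w, hfsymm (deg G u), hfsymm (deg G' u)])
      (by simp [hD])
      (by
        intro u w hu hw
        by_cases hA : G.Adj u w
        · have hui : u ≠ vi := by
            rintro rfl
            exact hw (hN w hA)
          have hwi : w ≠ vi := by
            rintro rfl
            exact hu (hN u hA.symm)
          have hA' : G'.Adj u w := (hadj u w).2 ⟨hA, by tauto⟩
          simp [hD, hA, hA', hdeg u hui hu, hdeg w hwi hw]
        · have hA' : ¬G'.Adj u w := fun h => hA ((hadj u w).1 h).1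
          simp [hD, hA, hA'])
    have h3 : GA G - GA G' = (1 / 2) * ∑ u, ∑ w, D u w := by
      simp only [hD, Finset.sum_sub_distrib, mul_sub]
      unfold GA edgeSum
      simp only [hf]
    rw [h3, h2]
    ring
  have hDi : D vj vi = 2 * √(a + 1) / (a + 2) := by
    have hA' : ¬G'.Adj vj vi := fun h => ((hadj vj vi).1 h).2 (by tauto)
    simp only [hD, he.symm, hA', if_true, if_false, hf, hdegj, hdegi]
    ring_nf
  have hDS : ∀ w ∈ S, D vj w = f (a + 1) (deg G w) - f a (deg G w) := by
    intro w hw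
    obtain ⟨hwi, hA⟩ := (hmemS w).1 hw
    have hA' : G'.Adj vj w := (hadj vj w).2 ⟨hA, by tauto⟩
    simp only [hD, hA, hA', if_true, hdegj, hdegj', hdeg w hwi hA.ne']
  have hsum : ∑ w, D vj w = ∑ w ∈ S, (D vj w + 2 * √(a + 1) / (a + 2) / a) := by
    have hviS : vi ∉ S := by simp [hS]
    rw [Finset.sum_add_distrib, Finset.sum_const, nsmul_eq_mul, ← ha,
      mul_div_cancel₀ _ (by linarith : a ≠ 0), ← hDi, add_comm, ← Finset.sum_insert hviS]
    symm
    apply Finset.sum_subset (Finset.subset_univ _)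
    intro w _ hw
    have hA : ¬G.Adj vj w := by
      intro h
      simp only [Finset.mem_insert, hmemS] at hw
      tauto
    have hA' : ¬G'.Adj vj w := fun h => hA ((hadj vj w).1 h).1
    simp [hD, hA, hA']
  rw [← sub_pos, hdiff, hsum]
  have hd_real : (d : ℝ) = a + 1 := by rw [← hcard]; push_cast; rfl
  apply Finset.sum_pos _ (Finset.card_pos.1 (by omega))
  intro w hw
  rw [hDS w hw]
  obtain ⟨hwi, hA⟩ := (hmemS w).1 hw
  have hpos : 0 < 2 * √(a + 1) / (a + 2) / a :=
    div_pos (div_pos (mul_pos two_pos (Real.sqrt_pos.2 (by linarith))) (by linarith)) (by linarith)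
  rcases hcond with hcond | hcond
  · have hx : a + 1 ≤ deg G w := by
      rw [← hd_real]
      exact Nat.cast_le.2 (hcond w hA hwi)
    have := ga_term_mono (by linarith) hx
    simp only [hf]
    linarith
  · have hx0 : 0 < deg G w := by
      have : 0 < ndeg G w := by
        rw [ndeg_eq_card G w (Finset.univ.filter (G.Adj w)) (by simp)]
        exact Finset.card_pos.2 ⟨vj, by simpa using hA.symm⟩
      exact Nat.cast_pos.2 this
    have hmax : deg G w ≤ dmaxj := Nat.cast_le.2 (hdmaxj.2 ⟨w, hA, hwi, rfl⟩)
    have h1 := mul_ga_term_sub_lt ha1 hx0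
    have h2 := sqrt_div_sqrt_add_mono (c := a + 1 / 2) (by linarith) hx0.le hmax
    rw [hd_real, show a + 1 - 1 / 2 + 6 * (dmaxj : ℝ) = a + 1 / 2 + 6 * dmaxj by ring,
      show a + 1 + 1 = a + 2 by ring, mul_comm 2, ← div_div] at hcond
    have h3 : a * (2 * √(a * deg G w) / (a + deg G w) -
        2 * √((a + 1) * deg G w) / (a + 1 + deg G w)) < 2 * √(a + 1) / (a + 2) := by
      refine (h1.trans_le h2).trans_le ?_
      rw [mul_div_assoc]
      linarith
    rw [mul_comm, ← lt_div_iff₀ (by linarith)] at h3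
    simp only [hf]
    linarith
end
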